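/- Let ε : ℝ^m → ℝ be continuously differentiable, let η > 0, Q̄ ≥ 0, and let θ : ℝ → ℝ^m be a differentiable curve satisfying θ'(t) = −η ε(θ(t)) ∇ε(θ(t)) for all t ≥ 0. Assume ε(θ(0)) ≥ 0 and ‖∇ε(θ(s))‖² ≥ Q̄ for all s ≥ 0. Then for all t ≥ 0, 0 ≤ ε(θ(t)) ≤ e^{−η Q̄ t} · ε(θ(0)); i.e., the residual training error converges exponentially to zero at rate at least η·Q̄. -/

import Mathlib

/-- If the QNTK `‖∇ε‖²` stays bounded below by `Qbar` along the gradient flow of `½ε²`,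
then the residual error converges exponentially to zero at rate at least `η Qbar`. -/
theorem stmt_9 {m : ℕ} (ε : EuclideanSpace ℝ (Fin m) → ℝ) (hε : ContDiff ℝ 1 ε)
    (η : ℝ) (hη : 0 < η) (Qbar : ℝ) (hQbar : 0 ≤ Qbar)
    (θ : ℝ → EuclideanSpace ℝ (Fin m))
    (hθ : ∀ t : ℝ, 0 ≤ t → HasDerivAt θ (-(η * ε (θ t)) • gradient ε (θ t)) t)
    (hε0 : 0 ≤ ε (θ 0))
    (hQ : ∀ s : ℝ, 0 ≤ s → Qbar ≤ ‖gradient ε (θ s)‖ ^ 2) :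
    ∀ t : ℝ, 0 ≤ t →
      0 ≤ ε (θ t) ∧ ε (θ t) ≤ Real.exp (-(η * Qbar * t)) * ε (θ 0) := by
  have hf : ∀ t : ℝ, 0 ≤ t →
      HasDerivAt (fun s => ε (θ s)) (-(η * ‖gradient ε (θ t)‖ ^ 2 * ε (θ t))) t := by
    intro t ht
    have h1 : DifferentiableAt ℝ ε (θ t) := (hε.differentiable (by norm_num)) _
    have h2 := h1.hasGradientAt.hasFDerivAt.comp_hasDerivAt t (hθ t ht)
    refine h2.congr_deriv ?_
    rw [InnerProductSpace.toDual_apply_apply, inner_smul_right, real_inner_self_eq_norm_sq]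
    ring
  have anti : ∀ g g' : ℝ → ℝ, (∀ t, 0 ≤ t → HasDerivAt g (g' t) t) →
      (∀ t, 0 ≤ t → g' t ≤ 0) → AntitoneOn g (Set.Ici 0) := by
    intro g g' h h'
    refine antitoneOn_of_hasDerivWithinAt_nonpos (f' := g') (convex_Ici 0)
      (fun x hx => (h x hx).continuousAt.continuousWithinAt) ?_ ?_
    · intro x hx
      exact (h x (interior_subset hx)).hasDerivWithinAt
    · intro x hx
      exact h' x (interior_subset hx)
  have hsq : AntitoneOn (fun s => ε (θ s) ^ 2) (Set.Ici 0) := by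
    refine anti _ _ (fun t ht => (hf t ht).pow 2) ?_
    intro t ht
    have : 0 ≤ η * ‖gradient ε (θ t)‖ ^ 2 * ε (θ t) ^ 2 := by positivity
    norm_num
    nlinarith
  have hpos : ∀ t : ℝ, 0 ≤ t → 0 ≤ ε (θ t) := by
    intro t ht
    by_contra! hlt
    have hc : ContinuousOn (fun s => ε (θ s)) (Set.Icc 0 t) :=
      fun x hx => (hf x hx.1).continuousAt.continuousWithinAt
    obtain ⟨s, hs, hs0⟩ := intermediate_value_Icc' ht hc ⟨hlt.le, hε0⟩
    have h := hsq (Set.mem_Ici.2 hs.1) (Set.mem_Ici.2 ht) hs.2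
    simp only at h hs0
    rw [hs0] at h
    nlinarith
  have hexp : AntitoneOn (fun s => Real.exp (η * Qbar * s) * ε (θ s)) (Set.Ici 0) := by
    refine anti _ _ (fun t ht =>
      ((((hasDerivAt_id t).const_mul (η * Qbar)).exp).mul (hf t ht))) ?_
    intro t ht
    have h1 : 0 ≤ Real.exp (η * Qbar * t) *
        (η * ((‖gradient ε (θ t)‖ ^ 2 - Qbar) * ε (θ t))) :=
      mul_nonneg (Real.exp_pos _).le (mul_nonneg hη.le
        (mul_nonneg (sub_nonneg.2 (hQ t ht)) (hpos t ht)))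
    simp only [id]
    linarith
  intro t ht
  refine ⟨hpos t ht, ?_⟩
  have h := hexp (Set.mem_Ici.2 le_rfl) (Set.mem_Ici.2 ht) ht
  simp only [mul_zero, Real.exp_zero, one_mul] at h
  calc ε (θ t) = Real.exp (-(η * Qbar * t)) * (Real.exp (η * Qbar * t) * ε (θ t)) := by
        rw [← mul_assoc, ← Real.exp_add]; simp
    _ ≤ _ := mul_le_mul_of_nonneg_left h (Real.exp_pos _).le
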